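/- Let k be a positive integer and let T_k = (V, root, par) be a rooted directed tree in which card(Chi(root)) = k and every vertex other than root has exactly one child (so card(Chi^⟨j⟩(root)) = k for all j ≥ 1). Then ‖Λ_{T_k} e_root‖² = 1 + k·(π²/6 − 1), where e_root ∈ ℓ²(V) is the indicator function of the root. -/

import Mathlib

noncomputable section

open scoped ENNReal

/-- A rooted directed tree encoded by a vertex set `V`, a root, and a parent map. -/
structure TreeData (V : Type) where
  root : V
  par : V → V
  par_root : par root = root
  hroot : ∀ v : V, ∃ n : ℕ, par^[n] v = root

namespace TreeData

variable {V : Type}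

open scoped Classical in
/-- The depth of a vertex: the least `n` with `par^[n] v = root`. -/
def dep (T : TreeData V) (v : V) : ℕ := Nat.find (T.hroot v)

/-- The Cesàro map `Λ_T`. -/
def cesaro (T : TreeData V) (f : V → ℂ) : V → ℂ := fun v =>
  ((T.dep v : ℂ) + 1)⁻¹ * ∑ j ∈ Finset.range (T.dep v + 1), f (T.par^[j] v)

/-- The `n`-th level `Chi^⟨n⟩(root)`: vertices of depth `n`. -/
def level (T : TreeData V) (n : ℕ) : Set V := {v : V | T.dep v = n}

/-- The set of children of a vertex. -/
def chi (T : TreeData V) (u : V) : Set V := {v : V | v ≠ T.root ∧ T.par v = u}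

end TreeData

/-- The Hilbert space `ℓ²(V)` of square-summable complex functions on `V`. -/
abbrev L2 (V : Type) : Type := lp (fun _ : V => ℂ) 2

/-!
The path from `v` to the root meets the root exactly once, at step `dep v`, so
`(Λ_T e_root) v = (dep v + 1)⁻¹`. Grouping vertices by depth,
`‖Λ_T e_root‖² = ∑ n, card (Chi^⟨n⟩(root)) / (n + 1) ^ 2`. For `T_k` level `0` is the root alone and
all other levels have `k` elements, so Euler's `∑ n ≥ 1, 1 / n ^ 2 = π ^ 2 / 6`, without its first
term, gives the value.
-/

theorem hasSum_comp_of_hasSum_ncard_fiber {α β : Type*} {d : α → β} {g : β → ℝ} {s : ℝ}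
    (hg : 0 ≤ g) (hfin : ∀ b, (d ⁻¹' {b}).Finite)
    (hs : HasSum (fun b ↦ ((d ⁻¹' {b}).ncard : ℝ) * g b) s) :
    HasSum (fun a ↦ g (d a)) s := by
  have fiber_const (b : β) : (fun a : d ⁻¹' {b} ↦ g (d a)) = fun _ ↦ g b :=
    funext fun a ↦ congrArg g a.2
  have fiber_tsum (b : β) : ∑' a : d ⁻¹' {b}, g (d a) = (d ⁻¹' {b}).ncard * g b := by
    rw [fiber_const, tsum_const, nsmul_eq_mul, Nat.card_coe_set_eq]
  have fiber_summable (b : β) : Summable fun a : d ⁻¹' {b} ↦ g (d a) :=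
    have := (hfin b).to_subtype
    .of_finite
  have summable : Summable fun a ↦ g (d a) :=
    (summable_partition (s := fun b ↦ d ⁻¹' {b}) (fun a ↦ hg (d a)) fun a ↦ by simp).2
      ⟨fiber_summable, by simpa only [fiber_tsum] using hs.summable⟩
  have fiberwise := summable.hasSum.tsum_fiberwise d
  simp only [fiber_tsum] at fiberwise
  exact fiberwise.unique hs ▸ summable.hasSum

theorem exists_memℓp_two_norm_sq_eq_of_hasSum {α : Type*} {E : α → Type*}
    [∀ i, NormedAddCommGroup (E i)] {f : ∀ i, E i} {s : ℝ} (hf : HasSum (fun i ↦ ‖f i‖ ^ 2) s) :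
    ∃ h : Memℓp f 2, ‖(⟨f, h⟩ : lp E 2)‖ ^ 2 = s := by
  have h : Memℓp f 2 := memℓp_gen (by simpa using hf.summable)
  refine ⟨h, ?_⟩
  simpa [hf.tsum_eq] using lp.norm_rpow_eq_tsum (p := 2) (by norm_num) (⟨f, h⟩ : lp E 2)

theorem hasSum_one_div_add_two_sq :
    HasSum (fun n : ℕ ↦ 1 / ((n : ℝ) + 2) ^ 2) (Real.pi ^ 2 / 6 - 1) := by
  simpa [Finset.sum_range_succ] using (hasSum_nat_add_iff' 2).2 hasSum_zeta_two

namespace TreeData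

variable {V : Type} (T : TreeData V)

theorem iterate_par_dep (v : V) : T.par^[T.dep v] v = T.root := by
  classical
  exact Nat.find_spec (T.hroot v)

theorem iterate_par_ne_root {v : V} {j : ℕ} (hj : j < T.dep v) : T.par^[j] v ≠ T.root := by
  classical
  exact Nat.find_min (T.hroot v) hj

theorem dep_eq_zero_iff {v : V} : T.dep v = 0 ↔ v = T.root := by
  classical
  exact Nat.find_eq_zero (T.hroot v)

theorem dep_eq_dep_par_add_one {v : V} (hv : v ≠ T.root) : T.dep v = T.dep (T.par v) + 1 := by
  classical
  exact Nat.find_comp_succ (T.hroot v) (T.hroot (T.par v)) hv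

theorem level_zero : T.level 0 = {T.root} :=
  Set.ext fun _ ↦ T.dep_eq_zero_iff

theorem mem_level_succ_iff {n : ℕ} {v : V} :
    v ∈ T.level (n + 1) ↔ v ≠ T.root ∧ T.par v ∈ T.level n := by
  change T.dep v = n + 1 ↔ v ≠ T.root ∧ T.dep (T.par v) = n
  by_cases hv : v = T.root
  · simp [hv, T.dep_eq_zero_iff.2 rfl]
  · simp [hv, T.dep_eq_dep_par_add_one hv]

theorem level_succ_eq_biUnion_chi (n : ℕ) : T.level (n + 1) = ⋃ u ∈ T.level n, T.chi u := by
  ext v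
  simp [mem_level_succ_iff, chi, and_comm]

theorem pairwiseDisjoint_chi (s : Set V) : s.PairwiseDisjoint T.chi :=
  fun _ _ _ _ hne ↦ Set.disjoint_left.2 fun _ hu hw ↦ hne (hu.2.symm.trans hw.2)

theorem encard_level_succ {n : ℕ} {c : ℕ∞} (hfin : (T.level n).Finite)
    (hchi : ∀ u ∈ T.level n, (T.chi u).encard = c) :
    (T.level (n + 1)).encard = (T.level n).encard * c := by
  rw [level_succ_eq_biUnion_chi, hfin.encard_biUnion (T.pairwiseDisjoint_chi _),
    finsum_mem_congr rfl hchi, finsum_mem_eq_finite_toFinset_sum _ hfin, Finset.sum_const,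
    nsmul_eq_mul, hfin.encard_eq_coe_toFinset_card]

theorem encard_level_succ_of_encard_chi {k : ℕ} (hroot : (T.chi T.root).encard = k)
    (hother : ∀ v, v ≠ T.root → (T.chi v).encard = 1) (n : ℕ) :
    (T.level (n + 1)).encard = k := by
  induction n with
  | zero =>
    rw [T.encard_level_succ (c := k) (by simp [level_zero]) (by simpa [level_zero] using hroot)]
    simp [level_zero]
  | succ n ih =>
    have hchi : ∀ u ∈ T.level (n + 1), (T.chi u).encard = 1 :=
      fun u hu ↦ hother u (T.mem_level_succ_iff.1 hu).1
    rw [T.encard_level_succ (Set.finite_of_encard_eq_coe ih) hchi, mul_one, ih]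

theorem cesaro_single_root [DecidableEq V] (a : ℂ) (v : V) :
    T.cesaro (Pi.single T.root a) v = ((T.dep v : ℂ) + 1)⁻¹ * a := by
  have hsum : ∑ j ∈ Finset.range (T.dep v + 1), (Pi.single T.root a : V → ℂ) (T.par^[j] v) = a := by
    rw [Finset.sum_range_succ, iterate_par_dep, Pi.single_eq_same, Finset.sum_eq_zero, zero_add]
    intro j hj
    exact Pi.single_eq_of_ne (M := fun _ ↦ ℂ) (T.iterate_par_ne_root (Finset.mem_range.1 hj)) a
  rw [cesaro, hsum]

theorem norm_sq_cesaro_single_root [DecidableEq V] (v : V) :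
    ‖T.cesaro (Pi.single T.root 1) v‖ ^ 2 = 1 / ((T.dep v : ℝ) + 1) ^ 2 := by
  have hnorm : ‖(T.dep v : ℂ) + 1‖ = T.dep v + 1 := mod_cast Complex.norm_natCast (T.dep v + 1)
  rw [cesaro_single_root, mul_one, norm_inv, hnorm, inv_pow, one_div]

theorem exists_memℓp_norm_sq_cesaro_single_root_eq [DecidableEq V] {s : ℝ}
    (hfin : ∀ n, (T.level n).Finite)
    (hs : HasSum (fun n : ℕ ↦ ((T.level n).ncard : ℝ) * (1 / ((n : ℝ) + 1) ^ 2)) s) :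
    ∃ h : Memℓp (T.cesaro (Pi.single T.root 1)) 2,
      ‖(⟨T.cesaro (Pi.single T.root 1), h⟩ : L2 V)‖ ^ 2 = s := by
  apply exists_memℓp_two_norm_sq_eq_of_hasSum
  simp only [norm_sq_cesaro_single_root]
  exact hasSum_comp_of_hasSum_ncard_fiber (d := T.dep) (g := fun n : ℕ ↦ 1 / ((n : ℝ) + 1) ^ 2)
    (fun n ↦ by positivity) hfin hs

end TreeData

theorem cesaro_norm_sq_at_root_general {V : Type} [DecidableEq V] (T : TreeData V) (k : ℕ)
    (hlevel : ∀ n, (T.level (n + 1)).encard = k) :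
    ∃ h : Memℓp (T.cesaro ⇑(lp.single 2 T.root (1 : ℂ) : L2 V)) 2,
      ‖(⟨T.cesaro ⇑(lp.single 2 T.root (1 : ℂ) : L2 V), h⟩ : L2 V)‖ ^ 2
        = 1 + k * (Real.pi ^ 2 / 6 - 1) := by
  have hfin : ∀ n, (T.level n).Finite
    | 0 => by simp [T.level_zero]
    | n + 1 => Set.finite_of_encard_eq_coe (hlevel n)
  have hncard (n : ℕ) : (T.level (n + 1)).ncard = k := by simp [Set.ncard, hlevel n]
  refine T.exists_memℓp_norm_sq_cesaro_single_root_eq hfin ?_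
  rw [← hasSum_nat_add_iff' 1]
  simpa [hncard, T.level_zero, add_assoc, one_add_one_eq_two] using
    hasSum_one_div_add_two_sq.mul_left (k : ℝ)

/-- For the tree `T_k` whose root has `k` children and in which every other
vertex has exactly one child, the Cesàro map satisfies `‖Λ_{T_k} e_root‖² = 1 + k (π²/6 - 1)`. -/
theorem cesaro_norm_sq_at_root {V : Type} [Countable V] [Infinite V] [DecidableEq V]
    (T : TreeData V) (k : ℕ) (hk : 0 < k)
    (hroot : (T.chi T.root).encard = k)
    (hother : ∀ v : V, v ≠ T.root → (T.chi v).encard = 1) :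
    ∃ h : Memℓp (T.cesaro ⇑(lp.single 2 T.root (1 : ℂ) : L2 V)) 2,
      ‖(⟨T.cesaro ⇑(lp.single 2 T.root (1 : ℂ) : L2 V), h⟩ : L2 V)‖ ^ 2
        = 1 + k * (Real.pi ^ 2 / 6 - 1) :=
  cesaro_norm_sq_at_root_general T k (T.encard_level_succ_of_encard_chi hroot hother)
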